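/- arXiv:1205.6565 — 3 statements merged into one kernel-verified Lean document; each statement's English description precedes it below -/
import Mathlib

section
/- Let d ≥ 2 and 1 − 1/d < p < 1, or d = 1 and 1/3 < p < 1, and set C_p := (1/(1−p)) ( ∫_{ℝ^d} (1+|x|²)^{−p/(1−p)} dx )^{1−p}. Let μ ∈ D(E_p) and M(μ) := 1 + 2∫_{ℝ^d}|x|² dμ. Then for all τ > 0 with 4pC_pτ < 1, the proximal point μ_τ of μ for E_p satisfies W₂²(μ, μ_τ) ≤ 2τ ( E_p(μ) + C_p M(μ) ) / ( 1 − 4pC_pτ ). -/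
open MeasureTheory Filter ENNReal

noncomputable section

/-- Euclidean space `ℝ^d`. -/
abbrev Euc (d : ℕ) := EuclideanSpace ℝ (Fin d)

/-- The squared 2-Wasserstein distance, as an extended nonnegative real:
the infimum over couplings `γ` (Borel probability measures on `ℝ^d × ℝ^d`
with first marginal `μ` and second marginal `ν`) of `∫ |x-y|² dγ`. -/
noncomputable def W2sq {d : ℕ} (μ ν : Measure (Euc d)) : ℝ≥0∞ :=
  ⨅ (γ : Measure (Euc d × Euc d)) (_ : γ.map Prod.fst = μ ∧ γ.map Prod.snd = ν),
    ∫⁻ q, ENNReal.ofReal (‖q.1 - q.2‖ ^ 2) ∂γ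

/-- The 2-Wasserstein distance (a real number; degenerate when `W2sq = ∞`). -/
noncomputable def W2 {d : ℕ} (μ ν : Measure (Euc d)) : ℝ :=
  Real.sqrt (W2sq μ ν).toReal

/-- `γ` is an optimal transport plan from `μ` to `ν`. -/
def IsOptimalPlan {d : ℕ} (μ ν : Measure (Euc d)) (γ : Measure (Euc d × Euc d)) : Prop :=
  γ.map Prod.fst = μ ∧ γ.map Prod.snd = ν ∧
    ∫⁻ q, ENNReal.ofReal (‖q.1 - q.2‖ ^ 2) ∂γ = W2sq μ ν

/-- `P₂ᵃ(ℝ^d)`: Borel probability measures with finite second moment, absolutely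
continuous with respect to Lebesgue measure. -/
def P2a (d : ℕ) : Set (Measure (Euc d)) :=
  {μ | IsProbabilityMeasure μ ∧ μ ≪ volume ∧ ∫⁻ x, ENNReal.ofReal (‖x‖ ^ 2) ∂μ ≠ ⊤}

/-- The potential energy `E(μ) = ∫ (λ/2)|x|² dμ`. -/
noncomputable def Epot {d : ℕ} (lam : ℝ) (μ : Measure (Euc d)) : ℝ :=
  ∫ x, lam / 2 * ‖x‖ ^ 2 ∂μ

/-- The second moment `∫ |x|² dμ`. -/
noncomputable def sndMom {d : ℕ} (μ : Measure (Euc d)) : ℝ := ∫ x, ‖x‖ ^ 2 ∂μ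

/-- `ν` is a proximal point of `μ` for the (real-valued) functional `F`, with step `τ`,
relative to the class `S`: it minimizes `ρ ↦ W₂²(μ,ρ)/(2τ) + F(ρ)` over `S`. -/
def IsProximalPt {d : ℕ} (S : Set (Measure (Euc d))) (F : Measure (Euc d) → ℝ) (τ : ℝ)
    (μ ν : Measure (Euc d)) : Prop :=
  ν ∈ S ∧ ∀ ρ ∈ S, (W2 μ ν) ^ 2 / (2 * τ) + F ν ≤ (W2 μ ρ) ^ 2 / (2 * τ) + F ρ

/-- `U_p(s) = (s^p - s)/(p-1)` for `p ≠ 1`, and `U_1(s) = s log s`. -/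
noncomputable def Up (p s : ℝ) : ℝ :=
  if p = 1 then s * Real.log s else (s ^ p - s) / (p - 1)

/-- The (negative) Rényi entropy `E_p(ν) = ∫ U_p(f) dx` where `f` is the density of `ν`
with respect to Lebesgue measure. -/
noncomputable def Ep {d : ℕ} (p : ℝ) (ν : Measure (Euc d)) : ℝ :=
  ∫ x, Up p ((ν.rnDeriv volume x).toReal) ∂volume

/-- The effective domain of `E_p`: absolutely continuous probability measures with
finite second moment and `E_p < ∞`. -/
def DomEp (d : ℕ) (p : ℝ) : Set (Measure (Euc d)) :=
  {ν | ν ∈ P2a d ∧ Integrable (fun x => Up p ((ν.rnDeriv volume x).toReal)) volume}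

/-- The constant `C_p := (1/(1-p)) (∫ (1+|x|²)^{-p/(1-p)} dx)^{1-p}`. -/
noncomputable def Cp (d : ℕ) (p : ℝ) : ℝ :=
  (1 / (1 - p)) * (∫ x : Euc d, (1 + ‖x‖ ^ 2) ^ (-p / (1 - p)) ∂volume) ^ (1 - p)

/-!
Comparing `μτ` with the competitor `μ` itself gives `W₂²(μ,μτ)/(2τ) + E_p(μτ) ≤ E_p(μ)`, so
everything rests on a lower bound for `E_p(μτ)`. Writing `f` for the density of `ν`, one has
`E_p(ν) = (1 - ∫ f^p)/(1-p)`, and Hölder's inequality with exponents `1/p`, `1/(1-p)` applied to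
`f^p = (f (1+|x|²))^p ((1+|x|²)^{-p/(1-p)})^{1-p}` yields `E_p(ν) ≥ -C_p (1 + ∫|x|²dν)^p`
(`neg_Cp_mul_le_Ep`). The hypotheses on `d` and `p` make the weight integrable
(`integrable_weight`). Finally `∫|x|²dμτ ≤ 2∫|x|²dμ + 2W₂²(μ,μτ)` (`sndMom_le`) and the tangent
line bound `t^p ≤ p t + (1-p)` make the right-hand side affine in `W₂²` with slope
`4pC_pτ < 1`, so that it can be absorbed on the left.
-/

/-- Hölder's inequality in the form `∫ f^p g^q ≤ (∫ f)^p (∫ g)^q` for `p + q = 1`. -/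
theorem integral_rpow_mul_rpow_le {α : Type*} [MeasurableSpace α] {m : Measure α}
    {f g : α → ℝ} (hf0 : ∀ x, 0 ≤ f x) (hg0 : ∀ x, 0 ≤ g x)
    (hf : Integrable f m) (hg : Integrable g m) {p q : ℝ} (hp : 0 ≤ p) (hq : 0 ≤ q)
    (hpq : p + q = 1) :
    ∫ x, f x ^ p * g x ^ q ∂m ≤ (∫ x, f x ∂m) ^ p * (∫ x, g x ∂m) ^ q := by
  have hF : 0 ≤ ∫ x, f x ∂m := integral_nonneg hf0
  have hG : 0 ≤ ∫ x, g x ∂m := integral_nonneg hg0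
  have hfm : AEMeasurable (fun x => ENNReal.ofReal (f x)) m := hf.aemeasurable.ennreal_ofReal
  have hgm : AEMeasurable (fun x => ENNReal.ofReal (g x)) m := hg.aemeasurable.ennreal_ofReal
  have key := ENNReal.lintegral_mul_norm_pow_le hfm hgm hp hq hpq
  rw [← ofReal_integral_eq_lintegral_ofReal hf (ae_of_all _ hf0),
    ← ofReal_integral_eq_lintegral_ofReal hg (ae_of_all _ hg0),
    ENNReal.ofReal_rpow_of_nonneg hF hp, ENNReal.ofReal_rpow_of_nonneg hG hq,
    ← ENNReal.ofReal_mul (by positivity)] at key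
  rw [integral_eq_lintegral_of_nonneg_ae
    (ae_of_all _ fun x => mul_nonneg (Real.rpow_nonneg (hf0 x) _) (Real.rpow_nonneg (hg0 x) _))
    ((hf.aemeasurable.pow_const p).mul (hg.aemeasurable.pow_const q)).aestronglyMeasurable]
  refine ENNReal.toReal_le_of_le_ofReal (by positivity) (le_trans (le_of_eq ?_) key)
  refine lintegral_congr fun x => ?_
  rw [ENNReal.ofReal_mul (Real.rpow_nonneg (hf0 x) _), ENNReal.ofReal_rpow_of_nonneg (hf0 x) hp,
    ENNReal.ofReal_rpow_of_nonneg (hg0 x) hq]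

/-- The weight defining `C_p` decays like `|x|^{-2p/(1-p)}`, which is integrable as soon as
`2p/(1-p) > d`, that is `p > d/(d+2)`; for `d ≥ 2` this follows from `1 - 1/d ≥ d/(d+2)`. -/
theorem integrable_weight {d : ℕ} {p : ℝ}
    (hdp : (2 ≤ d ∧ 1 - 1 / (d : ℝ) < p ∧ p < 1) ∨ (d = 1 ∧ 1/3 < p ∧ p < 1)) :
    Integrable (fun x : Euc d => (1 + ‖x‖ ^ 2) ^ (-p / (1 - p))) volume := by
  have hlt : (d : ℝ) < 2 * p / (1 - p) := by
    rcases hdp with ⟨h2, hp, hp1⟩ | ⟨rfl, hp, hp1⟩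
    · have h2' : (2 : ℝ) ≤ d := by exact_mod_cast h2
      rw [lt_div_iff₀ (by linarith)]
      have h1 : (d : ℝ) * (1 - p) < 1 := by
        have : 1 - p < 1 / (d : ℝ) := by linarith
        calc (d : ℝ) * (1 - p) < d * (1 / d) := by gcongr
          _ = 1 := by field_simp
      have h3 : 1 / (d : ℝ) ≤ 1 / 2 := by gcongr
      linarith
    · rw [lt_div_iff₀ (by linarith)]
      push_cast
      linarith
  have h := integrable_rpow_neg_one_add_norm_sq (E := Euc d) (μ := volume) (r := 2 * p / (1 - p))
    (by simpa using hlt)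
  convert h using 3
  ring

theorem p_bounds {d : ℕ} {p : ℝ}
    (hdp : (2 ≤ d ∧ 1 - 1 / (d : ℝ) < p ∧ p < 1) ∨ (d = 1 ∧ 1/3 < p ∧ p < 1)) :
    0 < p ∧ p < 1 := by
  rcases hdp with ⟨h2, hp, hp1⟩ | ⟨-, hp, hp1⟩
  · have h2' : (2 : ℝ) ≤ d := by exact_mod_cast h2
    have h3 : 1 / (d : ℝ) ≤ 1 / 2 := by gcongr
    exact ⟨by linarith, hp1⟩
  · exact ⟨by linarith, hp1⟩

theorem Cp_nonneg {d : ℕ} {p : ℝ} (hp1 : p < 1) : 0 ≤ Cp d p := by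
  have h : 0 < 1 - p := by linarith
  have hI : 0 ≤ ∫ x : Euc d, (1 + ‖x‖ ^ 2) ^ (-p / (1 - p)) ∂volume :=
    integral_nonneg fun x => by positivity
  unfold Cp
  positivity

theorem integrable_norm_sq {d : ℕ} {ν : Measure (Euc d)} (hν : ν ∈ P2a d) :
    Integrable (fun x : Euc d => ‖x‖ ^ 2) ν := by
  refine ⟨by fun_prop, ?_⟩
  rw [hasFiniteIntegral_iff_ofReal (ae_of_all _ fun x => by positivity)]
  exact hν.2.2.lt_top

/-- The lower bound of the Rényi entropy by the second moment. -/
theorem neg_Cp_mul_le_Ep {d : ℕ} {p : ℝ}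
    (hdp : (2 ≤ d ∧ 1 - 1 / (d : ℝ) < p ∧ p < 1) ∨ (d = 1 ∧ 1/3 < p ∧ p < 1))
    {ν : Measure (Euc d)} (hν : ν ∈ DomEp d p) :
    -(Cp d p * (1 + sndMom ν) ^ p) ≤ Ep p ν := by
  obtain ⟨hp0, hp1⟩ := p_bounds hdp
  have hq : 0 < 1 - p := by linarith
  obtain ⟨hP, hU⟩ := hν
  have : IsProbabilityMeasure ν := hP.1
  have hsq := integrable_norm_sq hP
  set f : Euc d → ℝ := fun x => (ν.rnDeriv volume x).toReal with hf
  have hf0 : ∀ x, 0 ≤ f x := fun x => ENNReal.toReal_nonneg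
  have hfi : Integrable f volume := Measure.integrable_toReal_rnDeriv
  have hf1 : ∫ x, f x = 1 := by
    have := integral_toReal_rnDeriv_mul (μ := ν) (ν := volume) hP.2.1 (f := fun _ => (1 : ℝ))
    simpa using this
  have hUp : ∀ x, Up p (f x) = (1 - p)⁻¹ * (f x - f x ^ p) := by
    intro x
    have h' : p - 1 ≠ 0 := by linarith
    rw [Up, if_neg hp1.ne]
    field_simp
    ring
  have hfp : Integrable (fun x => f x ^ p) volume := by
    have : (fun x => f x ^ p) = fun x => f x - (1 - p) * Up p (f x) := by
      funext x
      rw [hUp]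
      field_simp
      ring
    rw [this]
    exact hfi.sub (hU.const_mul _)
  have hE : Ep p ν = (1 - p)⁻¹ * (1 - ∫ x, f x ^ p) := by
    have : Ep p ν = ∫ x, (1 - p)⁻¹ * (f x - f x ^ p) := integral_congr_ae (ae_of_all _ hUp)
    rw [this, integral_const_mul, integral_sub hfi hfp, hf1]
  have hw1 : Integrable (fun x : Euc d => 1 + ‖x‖ ^ 2) ν := (integrable_const _).add hsq
  have hfw : Integrable (fun x => f x * (1 + ‖x‖ ^ 2)) volume :=
    (integrable_toReal_rnDeriv_mul_iff hP.2.1).2 hw1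
  have hfwI : ∫ x, f x * (1 + ‖x‖ ^ 2) = 1 + sndMom ν := by
    rw [integral_toReal_rnDeriv_mul hP.2.1, integral_add (integrable_const _) hsq]
    simp [sndMom]
  have hol := integral_rpow_mul_rpow_le (m := volume)
    (f := fun x => f x * (1 + ‖x‖ ^ 2)) (g := fun x : Euc d => (1 + ‖x‖ ^ 2) ^ (-p / (1 - p)))
    (fun x => mul_nonneg (hf0 x) (by positivity)) (fun x => by positivity)
    hfw (integrable_weight hdp) hp0.le hq.le (by ring)
  have hpt : ∀ x : Euc d, (f x * (1 + ‖x‖ ^ 2)) ^ p * ((1 + ‖x‖ ^ 2) ^ (-p / (1 - p))) ^ (1 - p)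
      = f x ^ p := by
    intro x
    have hpos : (0 : ℝ) < 1 + ‖x‖ ^ 2 := by positivity
    rw [Real.mul_rpow (hf0 x) hpos.le, ← Real.rpow_mul hpos.le, div_mul_cancel₀ _ hq.ne',
      mul_assoc, ← Real.rpow_add hpos]
    simp
  simp only [hpt, hfwI] at hol
  have hmul := mul_le_mul_of_nonneg_left hol (inv_nonneg.2 hq.le)
  have hq' : 0 ≤ (1 - p)⁻¹ := inv_nonneg.2 hq.le
  rw [hE, Cp, one_div]
  linarith

/-- The quadratic cost of any coupling controls the second moment of the target. -/
theorem lintegral_norm_sq_le {d : ℕ} {μ ν : Measure (Euc d)} {γ : Measure (Euc d × Euc d)}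
    (h1 : γ.map Prod.fst = μ) (h2 : γ.map Prod.snd = ν) :
    ∫⁻ x, ENNReal.ofReal (‖x‖ ^ 2) ∂ν ≤ 2 * ∫⁻ x, ENNReal.ofReal (‖x‖ ^ 2) ∂μ
      + 2 * ∫⁻ q, ENNReal.ofReal (‖q.1 - q.2‖ ^ 2) ∂γ := by
  rw [← h1, ← h2, lintegral_map (by fun_prop) measurable_snd,
    lintegral_map (by fun_prop) measurable_fst,
    ← lintegral_const_mul _ (by fun_prop), ← lintegral_const_mul _ (by fun_prop),
    ← lintegral_add_left (by fun_prop)]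
  refine lintegral_mono fun q => ?_
  have hn : ‖q.2‖ ≤ ‖q.1‖ + ‖q.1 - q.2‖ := by
    simpa [norm_sub_rev, add_comm] using norm_le_norm_add_norm_sub' q.2 q.1
  have two_mul_eq (a : ℝ≥0∞) : 2 * a = ENNReal.ofReal 2 * a := by simp
  rw [two_mul_eq, two_mul_eq, ← ENNReal.ofReal_mul (by norm_num), ← ENNReal.ofReal_mul (by norm_num),
    ← ENNReal.ofReal_add (by positivity) (by positivity)]
  apply ENNReal.ofReal_le_ofReal
  nlinarith [sq_nonneg (‖q.1‖ - ‖q.1 - q.2‖), norm_nonneg q.2, norm_nonneg q.1,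
    norm_nonneg (q.1 - q.2)]

/-- The product coupling has finite cost. -/
theorem W2sq_ne_top {d : ℕ} {μ ν : Measure (Euc d)} (hμ : μ ∈ P2a d) (hν : ν ∈ P2a d) :
    W2sq μ ν ≠ ⊤ := by
  have : IsProbabilityMeasure μ := hμ.1
  have : IsProbabilityMeasure ν := hν.1
  have hi : Integrable (fun q : Euc d × Euc d => 2 * ‖q.1‖ ^ 2 + 2 * ‖q.2‖ ^ 2) (μ.prod ν) :=
    (((integrable_norm_sq hμ).comp_fst ν).const_mul 2).add
      (((integrable_norm_sq hν).comp_snd μ).const_mul 2)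
  have hc : Integrable (fun q : Euc d × Euc d => ‖q.1 - q.2‖ ^ 2) (μ.prod ν) := by
    refine hi.mono' (by fun_prop) (ae_of_all _ fun q => ?_)
    rw [Real.norm_of_nonneg (by positivity)]
    nlinarith [norm_sub_le q.1 q.2, norm_nonneg (q.1 - q.2), sq_nonneg (‖q.1‖ - ‖q.2‖),
      norm_nonneg q.1, norm_nonneg q.2]
  refine ne_top_of_le_ne_top ?_ (iInf₂_le (μ.prod ν) ⟨by simp, by simp⟩)
  rw [← ofReal_integral_eq_lintegral_ofReal hc (ae_of_all _ fun q => by positivity)]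
  exact ENNReal.ofReal_ne_top

theorem W2_sq {d : ℕ} (μ ν : Measure (Euc d)) : W2 μ ν ^ 2 = (W2sq μ ν).toReal :=
  Real.sq_sqrt ENNReal.toReal_nonneg

/-- The diagonal coupling has zero cost. -/
theorem W2_self {d : ℕ} (μ : Measure (Euc d)) : W2 μ μ = 0 := by
  have hm : Measurable fun x : Euc d => (x, x) := by fun_prop
  have : W2sq μ μ = 0 := by
    refine le_antisymm ((iInf₂_le (μ.map fun x => (x, x)) ⟨?_, ?_⟩).trans (le_of_eq ?_)) zero_le
    · rw [lintegral_map (by fun_prop) hm]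
      simp
    · rw [Measure.map_map measurable_fst hm]
      exact Measure.map_id
    · rw [Measure.map_map measurable_snd hm]
      exact Measure.map_id
  simp [W2, this]

theorem ofReal_sndMom {d : ℕ} {ν : Measure (Euc d)} (hν : ν ∈ P2a d) :
    ENNReal.ofReal (sndMom ν) = ∫⁻ x, ENNReal.ofReal (‖x‖ ^ 2) ∂ν :=
  ofReal_integral_eq_lintegral_ofReal (integrable_norm_sq hν) (ae_of_all _ fun x => by positivity)

theorem sndMom_nonneg {d : ℕ} (ν : Measure (Euc d)) : 0 ≤ sndMom ν :=
  integral_nonneg fun x => by positivity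

/-- Second moments are controlled along finite Wasserstein distances. No optimal plan is needed:
the bound holds for every coupling and passes to the infimum. -/
theorem sndMom_le {d : ℕ} {μ ν : Measure (Euc d)} (hμ : μ ∈ P2a d) (hν : ν ∈ P2a d) :
    sndMom ν ≤ 2 * sndMom μ + 2 * W2 μ ν ^ 2 := by
  have two_mul_eq (a : ℝ≥0∞) : 2 * a = ENNReal.ofReal 2 * a := by simp
  have h : ENNReal.ofReal ((sndMom ν - 2 * sndMom μ) / 2) ≤ W2sq μ ν := by
    refine le_iInf₂ fun γ hγ => ?_
    have hb := lintegral_norm_sq_le hγ.1 hγ.2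
    rw [← ofReal_sndMom hμ, ← ofReal_sndMom hν] at hb
    rcases eq_or_ne (∫⁻ q, ENNReal.ofReal (‖q.1 - q.2‖ ^ 2) ∂γ) ⊤ with ht | ht
    · rw [ht]
      exact le_top
    · rw [← ENNReal.ofReal_toReal ht] at hb ⊢
      rw [two_mul_eq, two_mul_eq, ← ENNReal.ofReal_mul (by norm_num), ← ENNReal.ofReal_mul (by norm_num),
        ← ENNReal.ofReal_add (mul_nonneg (by norm_num) (sndMom_nonneg μ)) (by positivity)] at hb
      have hb' := (ENNReal.ofReal_le_ofReal_iff (add_nonneg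
        (mul_nonneg (by norm_num) (sndMom_nonneg μ)) (by positivity))).1 hb
      exact ENNReal.ofReal_le_ofReal (by linarith)
  have := ENNReal.ofReal_le_iff_le_toReal (W2sq_ne_top hμ hν) |>.1 h
  rw [W2_sq]
  linarith

/-- **Distance bound for the proximal map of the Rényi entropy** (Lemma 4.5).
For `d ≥ 2` and `1 - 1/d < p < 1`, or `d = 1` and `1/3 < p < 1`, `μ ∈ D(E_p)`,
`M(μ) := 1 + 2∫|x|²dμ`, and all `τ > 0` with `4pC_pτ < 1`, the proximal point `μ_τ`
satisfies `W₂²(μ,μ_τ) ≤ 2τ(E_p(μ) + C_p M(μ))/(1 - 4pC_pτ)`. -/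
theorem renyi_proximal_distance_bound
    {d : ℕ} (p : ℝ)
    (hdp : (2 ≤ d ∧ 1 - 1 / (d : ℝ) < p ∧ p < 1) ∨ (d = 1 ∧ 1/3 < p ∧ p < 1))
    (μ : Measure (Euc d)) (hμ : μ ∈ DomEp d p)
    (τ : ℝ) (hτ : 0 < τ) (hsmall : 4 * p * Cp d p * τ < 1)
    (μτ : Measure (Euc d)) (hμτ : IsProximalPt (DomEp d p) (Ep p) τ μ μτ) :
    (W2 μ μτ) ^ 2 ≤ 2 * τ * (Ep p μ + Cp d p * (1 + 2 * sndMom μ)) / (1 - 4 * p * Cp d p * τ) := by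
  obtain ⟨hp0, hp1⟩ := p_bounds hdp
  obtain ⟨hmem, hmin⟩ := hμτ
  have hC : 0 ≤ Cp d p := Cp_nonneg hp1
  have hcmp := hmin μ hμ
  rw [W2_self, zero_pow two_ne_zero, zero_div, zero_add] at hcmp
  have hlow := neg_Cp_mul_le_Ep hdp hmem
  have hmom := sndMom_le hμ.1 hmem.1
  have hm := sndMom_nonneg μ
  have hmτ := sndMom_nonneg μτ
  have htan : (1 + sndMom μτ) ^ p ≤ p * (1 + sndMom μτ) + (1 - p) := by
    simpa using Real.geom_mean_le_arith_mean2_weighted hp0.le (sub_nonneg.2 hp1.le)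
      (by linarith : 0 ≤ 1 + sndMom μτ) zero_le_one (by ring)
  set W := W2 μ μτ ^ 2
  -- The slope `2p` of `W` carries the factor `p`; in the constant term `p M + (1 - p) ≤ M`
  -- because `M = 1 + 2 ∫ |x|² dμ ≥ 1`.
  have hpow : (1 + sndMom μτ) ^ p ≤ (1 + 2 * sndMom μ) + 2 * p * W := by
    have h1 := mul_le_mul_of_nonneg_left hmom hp0.le
    have h2 := mul_nonneg (sub_nonneg.2 hp1.le) hm
    linarith
  have hCpow := mul_le_mul_of_nonneg_left hpow hC
  have hW : W / (2 * τ) ≤ Ep p μ + Cp d p * ((1 + 2 * sndMom μ) + 2 * p * W) := by linarith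
  rw [div_le_iff₀ (by positivity)] at hW
  rw [le_div_iff₀ (by linarith)]
  linarith
end
end

section
/- Let 0 < β < 1, τ > 0, and r > 0, and let θ_τ(t) denote the unique s > τβ with t^β = s^β − τβ s^{β−1}. Then for all t ≥ r: (r/(r+τ)) τ ≤ θ_τ(t) − t ≤ τ. -/
/-!
The defining equation, multiplied by `s`, reads `t ^ β * s = s ^ β * (s - τ * β)`. Both bounds come
from concavity of `x ↦ x ^ β`, i.e. from its graph lying below its tangents (Bernoulli's inequality).

* The tangent at `s`, evaluated at `t`, gives `s - t ≤ τ`.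
* The tangent at `t`, evaluated at `s`, gives `τ * t ≤ (s - t) * (s - τ * β)`. Hence `t < s`, and
  with `s - τ * β ≤ s ≤ t + τ` we get `s - t ≥ τ * t / (t + τ)`; the right side is increasing in `t`,
  so it is at least its value at `r ≤ t`.
-/

/-- The graph of the concave function `x ↦ x ^ β` lies below its tangent at `b`, multiplied
by `b` to avoid the exponent `β - 1`. -/
lemma rpow_mul_le_tangent {β a b : ℝ} (hβ0 : 0 < β) (hβ1 : β < 1) (ha : 0 < a) (hb : 0 < b) :
    a ^ β * b ≤ b ^ β * (b + β * (a - b)) := by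
  have h : (1 + (a / b - 1)) ^ β ≤ 1 + β * (a / b - 1) :=
    rpow_one_add_le_one_add_mul_self (by linarith [div_pos ha hb]) hβ0.le hβ1.le
  rw [add_sub_cancel, Real.div_rpow ha.le hb.le, div_le_iff₀ (Real.rpow_pos_of_pos hb β)] at h
  calc a ^ β * b ≤ (1 + β * (a / b - 1)) * b ^ β * b := by gcongr
    _ = b ^ β * (b + β * (a - b)) := by field_simp


/-- **Step-size bounds for the proximal time shift** (Lemma 4.9). Let `0 < β < 1`,
`τ > 0`, `r > 0`. If `t ≥ r` and `s = θ_τ(t)` is the unique `s > τβ` with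
`t^β = s^β - τβ s^{β-1}`, then `(r/(r+τ)) τ ≤ θ_τ(t) - t ≤ τ`. -/
theorem proximal_time_shift_bounds
    (β τ r : ℝ) (hβ0 : 0 < β) (hβ1 : β < 1) (hτ : 0 < τ) (hr : 0 < r) :
    ∀ t s : ℝ, r ≤ t → τ * β < s → t ^ β = s ^ β - τ * β * s ^ (β - 1) →
      r / (r + τ) * τ ≤ s - t ∧ s - t ≤ τ := by
  intro t s hrt hs heq
  have ht : 0 < t := hr.trans_le hrt
  have hs0 : 0 < s := (mul_pos hτ hβ0).trans hs
  have hsβ : 0 < s ^ β := Real.rpow_pos_of_pos hs0 β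
  have key : t ^ β * s = s ^ β * (s - τ * β) := by
    rw [heq, Real.rpow_sub_one hs0.ne']
    field_simp
  have hup : s - t ≤ τ := by
    have h := rpow_mul_le_tangent hβ0 hβ1 ht hs0
    rw [key] at h
    have h1 := le_of_mul_le_mul_left h hsβ
    refine le_of_mul_le_mul_left ?_ hβ0
    linarith
  have hlow : τ * t ≤ (s - t) * (s - τ * β) := by
    have h := mul_le_mul_of_nonneg_right (rpow_mul_le_tangent hβ0 hβ1 hs0 ht) hs0.le
    have h1 : s ^ β * (t * s) ≤ s ^ β * ((s - τ * β) * (t + β * (s - t))) := by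
      linear_combination h + (t + β * (s - t)) * key
    have h2 := le_of_mul_le_mul_left h1 hsβ
    refine le_of_mul_le_mul_left ?_ hβ0
    linarith
  have hts : 0 < s - t :=
    pos_of_mul_pos_left ((mul_pos hτ ht).trans_le hlow) (sub_pos.2 hs).le
  refine ⟨?_, hup⟩
  have hlow' : τ * t ≤ (s - t) * (t + τ) :=
    hlow.trans (mul_le_mul_of_nonneg_left (by linarith [mul_pos hτ hβ0]) hts.le)
  rw [div_mul_eq_mul_div, div_le_iff₀ (by positivity)]
  -- Replacing `t` by `r` adds `(t - r) * (τ - (s - t)) ≥ 0` to the slack of `hlow'`.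
  linarith [mul_nonneg (sub_nonneg.2 hrt) (sub_nonneg.2 hup)]
end

section
/- Equip ℝ² with the ℓ∞ norm ‖x‖_∞ = max(|x₁|,|x₂|), and let K := { x ∈ ℝ² : 3x₂ ≤ x₁ − 4 }. Then for every τ > 0: (i) the point (1,−1) is the unique minimizer over K of x ↦ (1/(2τ))‖x − (0,0)‖_∞²; (ii) the point (5/2,−1/2) is the unique minimizer over K of x ↦ (1/(2τ))‖x − (1,1)‖_∞²; and (iii) ‖(1,−1) − (5/2,−1/2)‖_∞ = 3/2 > 1 = ‖(0,0) − (1,1)‖_∞. Hence the proximal map for the indicator function of the closed convex set K in this Banach space fails to be a contraction. -/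
/-!
For `z = x - y`, membership of `x` in `K` becomes `4 r ≤ z₁ - 3 z₂` with `r = 1` for `y = (0,0)` and
`r = 3/2` for `y = (1,1)`. Since `z₁ - 3 z₂ ≤ 4 ‖z‖_∞`, with equality at norm `r` only for
`z = (r, -r)`, the nearest point of `K` to `y` is uniquely `y + (r, -r)` (`lt_norm_of_ne_corner`).
Scaling and squaring are strictly increasing on `[0, ∞)`, so minimizing the norm suffices.
-/

/-- `ℝ²` with the `ℓ∞` norm (the sup norm on `Fin 2 → ℝ`). -/
abbrev LinfR2 := Fin 2 → ℝ

/-- The closed half-plane `K = {x : 3x₂ ≤ x₁ - 4}`. -/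
def Khalf : Set LinfR2 := {x | 3 * x 1 ≤ x 0 - 4}

lemma norm_vec2 (a b : ℝ) : ‖(![a, b] : LinfR2)‖ = max |a| |b| := by
  apply le_antisymm
  · rw [pi_norm_le_iff_of_nonneg (by positivity)]
    intro i
    fin_cases i <;> simp
  · exact max_le (norm_le_pi_norm (![a, b] : LinfR2) 0) (norm_le_pi_norm (![a, b] : LinfR2) 1)

/-- In the half-plane `4 r ≤ z₁ - 3 z₂`, the corner `(r, -r)` of the `ℓ∞` ball of radius `r` is the
only point of norm at most `r`. -/
lemma lt_norm_of_ne_corner {r : ℝ} {z : LinfR2} (hz : 4 * r ≤ z 0 - 3 * z 1)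
    (hne : z ≠ ![r, -r]) : r < ‖z‖ := by
  by_contra! h
  have h0 := (abs_le.1 ((norm_le_pi_norm z 0).trans h)).2
  have h1 := (abs_le.1 ((norm_le_pi_norm z 1).trans h)).1
  apply hne
  ext i
  fin_cases i
  · change z 0 = r
    linarith
  · change z 1 = -r
    linarith

/-- If `p = y + (r, -r)` and `K` is the translate by `y` of the half-plane `4 r ≤ z₁ - 3 z₂`,
then `p` is the strict minimizer over `K` of the proximal objective at `y`. -/
lemma prox_objective_lt {τ r : ℝ} (hτ : 0 < τ) (hr : 0 ≤ r) {x y p : LinfR2}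
    (hp : p - y = ![r, -r]) (hx : x ∈ Khalf) (hy : 4 * r = 4 - y 0 + 3 * y 1) (hne : x ≠ p) :
    1 / (2 * τ) * ‖p - y‖ ^ 2 < 1 / (2 * τ) * ‖x - y‖ ^ 2 := by
  have hx' : 3 * x 1 ≤ x 0 - 4 := hx
  have hlt : r < ‖x - y‖ := by
    apply lt_norm_of_ne_corner
    · simp only [Pi.sub_apply]
      linarith
    · rw [← hp]
      exact fun h => hne (sub_left_injective h)
  have hpn : ‖p - y‖ = r := by
    rw [hp, norm_vec2, abs_neg, max_self, abs_of_nonneg hr]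
  rw [hpn]
  gcongr

/-- **The proximal map on a Banach space need not be a contraction** (introduction).
In `(ℝ², ‖·‖_∞)`, with `K = {3x₂ ≤ x₁ - 4}`, for every `τ > 0`:
(i) `(1,-1)` is the unique minimizer over `K` of `x ↦ (1/(2τ))‖x - (0,0)‖_∞²`;
(ii) `(5/2,-1/2)` is the unique minimizer over `K` of `x ↦ (1/(2τ))‖x - (1,1)‖_∞²`;
(iii) `‖(1,-1) - (5/2,-1/2)‖_∞ = 3/2 > 1 = ‖(0,0) - (1,1)‖_∞`;
so the proximal map of the indicator function of `K` is not a contraction. -/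
theorem linf_proximal_not_contraction :
    ∀ τ : ℝ, 0 < τ →
      ((![1, -1] : LinfR2) ∈ Khalf ∧
        ∀ x ∈ Khalf, x ≠ ![1, -1] →
          1 / (2 * τ) * ‖(![1, -1] : LinfR2) - ![0, 0]‖ ^ 2
            < 1 / (2 * τ) * ‖x - ![0, 0]‖ ^ 2) ∧
      ((![5/2, -1/2] : LinfR2) ∈ Khalf ∧
        ∀ x ∈ Khalf, x ≠ ![5/2, -1/2] →
          1 / (2 * τ) * ‖(![5/2, -1/2] : LinfR2) - ![1, 1]‖ ^ 2
            < 1 / (2 * τ) * ‖x - ![1, 1]‖ ^ 2) ∧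
      (‖(![1, -1] : LinfR2) - ![5/2, -1/2]‖ = 3/2 ∧
        ‖(![0, 0] : LinfR2) - ![1, 1]‖ = 1 ∧
        ‖(![0, 0] : LinfR2) - ![1, 1]‖ < ‖(![1, -1] : LinfR2) - ![5/2, -1/2]‖) := by
  intro τ hτ
  have hfar : ‖(![1, -1] : LinfR2) - ![5/2, -1/2]‖ = 3/2 := by
    have h : (![1, -1] : LinfR2) - ![5/2, -1/2] = ![-(3/2), -(1/2)] := by
      ext i
      fin_cases i <;> norm_num
    rw [h, norm_vec2, abs_neg, abs_neg, abs_of_pos, abs_of_pos, max_eq_left] <;> norm_num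
  have hnear : ‖(![0, 0] : LinfR2) - ![1, 1]‖ = 1 := by
    have h : (![0, 0] : LinfR2) - ![1, 1] = ![-1, -1] := by
      ext i
      fin_cases i <;> norm_num
    rw [h, norm_vec2]
    norm_num
  refine ⟨⟨?_, fun x hx hne => ?_⟩, ⟨?_, fun x hx hne => ?_⟩, hfar, hnear, ?_⟩
  · norm_num [Khalf]
  · refine prox_objective_lt (r := 1) hτ (by norm_num) ?_ hx (by norm_num) hne
    ext i
    fin_cases i <;> norm_num
  · norm_num [Khalf]
  · refine prox_objective_lt (r := 3/2) hτ (by norm_num) ?_ hx (by norm_num) hne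
    ext i
    fin_cases i <;> norm_num
  · rw [hfar, hnear]
    norm_num
end
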